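/- Let L > 0 and suppose (u1, u2, v1, v2) are smooth, L-periodic in x, and satisfy the four-component system: ∂ₜm1 + n2 g1 g2 + m1(f2 g2 + 2 f1 g1) = 0, ∂ₜm2 − n1 g1 g2 − m2(f1 g1 + 2 f2 g2) = 0, ∂ₜn1 − m2 f1 f2 − n1(f2 g2 + 2 f1 g1) = 0, ∂ₜn2 + m1 f1 f2 + n2(f1 g1 + 2 f2 g2) = 0. Then the quantity H₀(t) = ∫₀ᴸ (f1 g1 + f2 g2)(m2 f2 + n1 g1)(x, t) dx is independent of t. -/

import Mathlib

/-!
The density `φ w`, with `φ = f1 g1 + f2 g2` and `w = m2 f2 + n1 g1`, obeys a local conservation law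
`∂ₜ(φ w) = ∂ₓ J`, although the system determines the time derivatives of `f1, f2, g1, g2` only
nonlocally. Writing `z = m1 f1 + n2 g2`, the definitions give

  `∂ₓf1 = n1 - g2`, `∂ₓg2 = m2 - f1`, `∂ₓf2 = g1 - n2`, `∂ₓg1 = f2 - m1`, hence `∂ₓφ = w - z`,

and the system reads

  `∂ₜm1 = -g1 z - m1 φ`, `∂ₜm2 = g2 w + m2 φ`, `∂ₜn1 = f1 w + n1 φ`, `∂ₜn2 = -f2 z - n2 φ`.

Differentiating the four first-order relations in time (mixed partials commute, `pX_pT`) yields the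
`x`-derivatives of `∂ₜf1, ∂ₜf2, ∂ₜg1, ∂ₜg2`, and the conservation law holds with the flux

  `J = ∂ₜf1 ∂ₜg1 + ∂ₜg2 ∂ₜf2 + φ (g1 ∂ₜf1 + f2 ∂ₜg2)`.

Since `J` is periodic, Fubini and the fundamental theorem of calculus
(`integral_eq_of_conservation_law`) show that the integral of `φ w` over a period is constant.
-/

/-- Partial derivative with respect to the first (space) variable. -/
noncomputable def pX (f : ℝ × ℝ → ℝ) : ℝ × ℝ → ℝ :=
  fun p => deriv (fun x => f (x, p.2)) p.1

/-- Partial derivative with respect to the second (time) variable. -/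
noncomputable def pT (f : ℝ × ℝ → ℝ) : ℝ × ℝ → ℝ :=
  fun p => deriv (fun t => f (p.1, t)) p.2

lemma pX_eq_fderiv {f : ℝ × ℝ → ℝ} (hf : ContDiff ℝ (⊤ : ℕ∞) f) :
    pX f = fun p => fderiv ℝ f p (1, 0) := by
  funext p
  have h1 : HasFDerivAt f (fderiv ℝ f p) (p.1, p.2) :=
    (hf.differentiable (by simp) p).hasFDerivAt
  have h2 : HasDerivAt (fun x : ℝ => (x, p.2)) (1, 0) p.1 :=
    (hasDerivAt_id p.1).prodMk (hasDerivAt_const p.1 p.2)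
  exact (h1.comp_hasDerivAt p.1 h2).deriv

lemma pT_eq_fderiv {f : ℝ × ℝ → ℝ} (hf : ContDiff ℝ (⊤ : ℕ∞) f) :
    pT f = fun p => fderiv ℝ f p (0, 1) := by
  funext p
  have h1 : HasFDerivAt f (fderiv ℝ f p) (p.1, p.2) :=
    (hf.differentiable (by simp) p).hasFDerivAt
  have h2 : HasDerivAt (fun t : ℝ => (p.1, t)) (0, 1) p.2 :=
    (hasDerivAt_const p.2 p.1).prodMk (hasDerivAt_id p.2)
  exact (h1.comp_hasDerivAt p.2 h2).deriv

lemma contDiff_fderiv_apply {f : ℝ × ℝ → ℝ} (hf : ContDiff ℝ (⊤ : ℕ∞) f) (v : ℝ × ℝ) :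
    ContDiff ℝ (⊤ : ℕ∞) (fun p => fderiv ℝ f p v) :=
  (hf.fderiv_right (m := (⊤ : ℕ∞)) (by simp)).clm_apply contDiff_const

lemma contDiff_pX {f : ℝ × ℝ → ℝ} (hf : ContDiff ℝ (⊤ : ℕ∞) f) :
    ContDiff ℝ (⊤ : ℕ∞) (pX f) := by
  rw [pX_eq_fderiv hf]
  exact contDiff_fderiv_apply hf _

lemma contDiff_pT {f : ℝ × ℝ → ℝ} (hf : ContDiff ℝ (⊤ : ℕ∞) f) :
    ContDiff ℝ (⊤ : ℕ∞) (pT f) := by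
  rw [pT_eq_fderiv hf]
  exact contDiff_fderiv_apply hf _

lemma hasDerivAt_pX {f : ℝ × ℝ → ℝ} (hf : ContDiff ℝ (⊤ : ℕ∞) f) (x t : ℝ) :
    HasDerivAt (fun y => f (y, t)) (pX f (x, t)) x := by
  have h : Differentiable ℝ (fun y : ℝ => f (y, t)) :=
    (hf.differentiable (by simp)).comp (differentiable_id.prodMk (differentiable_const t))
  exact (h x).hasDerivAt

lemma hasDerivAt_pT {f : ℝ × ℝ → ℝ} (hf : ContDiff ℝ (⊤ : ℕ∞) f) (x t : ℝ) :
    HasDerivAt (fun s => f (x, s)) (pT f (x, t)) t := by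
  have h : Differentiable ℝ (fun s : ℝ => f (x, s)) :=
    (hf.differentiable (by simp)).comp ((differentiable_const x).prodMk differentiable_id)
  exact (h t).hasDerivAt

/-- Mixed partial derivatives of a smooth function commute. -/
lemma pX_pT {f : ℝ × ℝ → ℝ} (hf : ContDiff ℝ (⊤ : ℕ∞) f) : pX (pT f) = pT (pX f) := by
  rw [pX_eq_fderiv (contDiff_pT hf), pT_eq_fderiv (contDiff_pX hf), pT_eq_fderiv hf,
    pX_eq_fderiv hf]
  funext p
  have hd : DifferentiableAt ℝ (fderiv ℝ f) p :=
    (hf.fderiv_right (m := (⊤ : ℕ∞)) (by simp)).differentiable (by simp) p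
  have hs : IsSymmSndFDerivAt ℝ f p :=
    hf.contDiffAt.isSymmSndFDerivAt (by
      rw [minSmoothness_of_isRCLikeNormedField]
      exact WithTop.coe_le_coe.2 (le_top : (2 : ℕ∞) ≤ ⊤))
  have key (v w : ℝ × ℝ) :
      fderiv ℝ (fun q => fderiv ℝ f q v) p w = fderiv ℝ (fderiv ℝ f) p w v := by
    rw [fderiv_clm_apply hd (differentiableAt_const v)]
    simp
  rw [key, key]
  exact hs _ _

lemma pX_periodic {L : ℝ} {f : ℝ × ℝ → ℝ} (hf : ∀ x t : ℝ, f (x + L, t) = f (x, t)) (x t : ℝ) :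
    pX f (x + L, t) = pX f (x, t) := by
  have h := deriv_comp_add_const (fun y => f (y, t)) L x
  simp only [hf] at h
  exact h.symm

lemma pT_periodic {L : ℝ} {f : ℝ × ℝ → ℝ} (hf : ∀ x t : ℝ, f (x + L, t) = f (x, t)) (x t : ℝ) :
    pT f (x + L, t) = pT f (x, t) := by
  simp only [pT, hf]

/-- A density `Φ` with `∂ₜΦ = ∂ₓJ`, where the flux `J` takes the same value at `0` and `L`, has
constant integral over `[0, L]`: integrate `∂ₜΦ` over `[0, L] × [t2, t1]` in both orders. -/
lemma integral_eq_of_conservation_law {L : ℝ} {Φ J : ℝ × ℝ → ℝ}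
    (hΦ : ContDiff ℝ (⊤ : ℕ∞) Φ)
    (hJ : ∀ x t : ℝ, HasDerivAt (fun y => J (y, t)) (pT Φ (x, t)) x)
    (hper : ∀ t : ℝ, J (L, t) = J (0, t)) (t1 t2 : ℝ) :
    ∫ x in (0 : ℝ)..L, Φ (x, t1) = ∫ x in (0 : ℝ)..L, Φ (x, t2) := by
  have hc : Continuous (pT Φ) := (contDiff_pT hΦ).continuous
  have hΦc : Continuous Φ := hΦ.continuous
  rw [← sub_eq_zero, ← intervalIntegral.integral_sub
    (Continuous.intervalIntegrable (by fun_prop) _ _)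
    (Continuous.intervalIntegrable (by fun_prop) _ _)]
  have h1 (x : ℝ) : Φ (x, t1) - Φ (x, t2) = ∫ t in t2..t1, pT Φ (x, t) :=
    (intervalIntegral.integral_eq_sub_of_hasDerivAt (fun t _ => hasDerivAt_pT hΦ x t)
      (Continuous.intervalIntegrable (by fun_prop) _ _)).symm
  have h2 (t : ℝ) : ∫ x in (0 : ℝ)..L, pT Φ (x, t) = 0 := by
    rw [intervalIntegral.integral_eq_sub_of_hasDerivAt (fun x _ => hJ x t)
      (Continuous.intervalIntegrable (by fun_prop) _ _), hper, sub_self]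
  simp_rw [h1]
  rw [MeasureTheory.intervalIntegral_intervalIntegral_swap]
  · simp [h2]
  · refine MeasureTheory.IntegrableOn.mono_set (t := Set.uIcc 0 L ×ˢ Set.uIcc t2 t1) ?_
      (Set.prod_mono Set.uIoc_subset_uIcc Set.uIoc_subset_uIcc)
    exact hc.continuousOn.integrableOn_compact (isCompact_uIcc.prod isCompact_uIcc)

theorem stmt_16
    (L : ℝ) (hL : 0 < L)
    (u1 u2 v1 v2 : ℝ × ℝ → ℝ)
    (hu1 : ContDiff ℝ (⊤ : ℕ∞) u1) (hu2 : ContDiff ℝ (⊤ : ℕ∞) u2)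
    (hv1 : ContDiff ℝ (⊤ : ℕ∞) v1) (hv2 : ContDiff ℝ (⊤ : ℕ∞) v2)
    (hperu1 : ∀ x t : ℝ, u1 (x + L, t) = u1 (x, t))
    (hperu2 : ∀ x t : ℝ, u2 (x + L, t) = u2 (x, t))
    (hperv1 : ∀ x t : ℝ, v1 (x + L, t) = v1 (x, t))
    (hperv2 : ∀ x t : ℝ, v2 (x + L, t) = v2 (x, t))
    (m1 m2 n1 n2 f1 f2 g1 g2 : ℝ × ℝ → ℝ)
    (hm1 : m1 = fun p => u1 p - pX (pX u1) p)
    (hm2 : m2 = fun p => u2 p - pX (pX u2) p)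
    (hn1 : n1 = fun p => v1 p - pX (pX v1) p)
    (hn2 : n2 = fun p => v2 p - pX (pX v2) p)
    (hf1 : f1 = fun p => u2 p - pX v1 p)
    (hf2 : f2 = fun p => u1 p + pX v2 p)
    (hg1 : g1 = fun p => v2 p + pX u1 p)
    (hg2 : g2 = fun p => v1 p - pX u2 p)
    (hsys : ∀ p : ℝ × ℝ,
        pT m1 p + n2 p * g1 p * g2 p + m1 p * (f2 p * g2 p + 2 * f1 p * g1 p) = 0 ∧
        pT m2 p - n1 p * g1 p * g2 p - m2 p * (f1 p * g1 p + 2 * f2 p * g2 p) = 0 ∧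
        pT n1 p - m2 p * f1 p * f2 p - n1 p * (f2 p * g2 p + 2 * f1 p * g1 p) = 0 ∧
        pT n2 p + m1 p * f1 p * f2 p + n2 p * (f1 p * g1 p + 2 * f2 p * g2 p) = 0) :
    ∀ t1 t2 : ℝ,
      (∫ x in (0:ℝ)..L,
          (f1 (x, t1) * g1 (x, t1) + f2 (x, t1) * g2 (x, t1))
            * (m2 (x, t1) * f2 (x, t1) + n1 (x, t1) * g1 (x, t1)))
        = ∫ x in (0:ℝ)..L,
            (f1 (x, t2) * g1 (x, t2) + f2 (x, t2) * g2 (x, t2))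
              * (m2 (x, t2) * f2 (x, t2) + n1 (x, t2) * g1 (x, t2)) := by
  have su1 := contDiff_pX hu1
  have su2 := contDiff_pX hu2
  have sv1 := contDiff_pX hv1
  have sv2 := contDiff_pX hv2
  have sm2 : ContDiff ℝ (⊤ : ℕ∞) m2 := hm2 ▸ hu2.sub (contDiff_pX su2)
  have sm1 : ContDiff ℝ (⊤ : ℕ∞) m1 := hm1 ▸ hu1.sub (contDiff_pX su1)
  have sn1 : ContDiff ℝ (⊤ : ℕ∞) n1 := hn1 ▸ hv1.sub (contDiff_pX sv1)
  have sn2 : ContDiff ℝ (⊤ : ℕ∞) n2 := hn2 ▸ hv2.sub (contDiff_pX sv2)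
  have sf1 : ContDiff ℝ (⊤ : ℕ∞) f1 := hf1 ▸ hu2.sub sv1
  have sf2 : ContDiff ℝ (⊤ : ℕ∞) f2 := hf2 ▸ hu1.add sv2
  have sg1 : ContDiff ℝ (⊤ : ℕ∞) g1 := hg1 ▸ hv2.add su1
  have sg2 : ContDiff ℝ (⊤ : ℕ∞) g2 := hg2 ▸ hv1.sub su2
  have xf1 : pX f1 = fun p => n1 p - g2 p := by
    funext ⟨x, t⟩
    have h := ((hasDerivAt_pX hu2 x t).sub (hasDerivAt_pX sv1 x t)).deriv
    rw [hf1, hn1, hg2]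
    exact h.trans (by ring)
  have xg2 : pX g2 = fun p => m2 p - f1 p := by
    funext ⟨x, t⟩
    have h := ((hasDerivAt_pX hv1 x t).sub (hasDerivAt_pX su2 x t)).deriv
    rw [hg2, hm2, hf1]
    exact h.trans (by ring)
  have xf2 : pX f2 = fun p => g1 p - n2 p := by
    funext ⟨x, t⟩
    have h := ((hasDerivAt_pX hu1 x t).add (hasDerivAt_pX sv2 x t)).deriv
    rw [hf2, hg1, hn2]
    exact h.trans (by ring)
  have xg1 : pX g1 = fun p => f2 p - m1 p := by
    funext ⟨x, t⟩
    have h := ((hasDerivAt_pX hv2 x t).add (hasDerivAt_pX su1 x t)).deriv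
    rw [hg1, hf2, hm1]
    exact h.trans (by ring)
  -- The same relations for the time derivatives, since mixed partials commute.
  have tf1 (x t : ℝ) : pX (pT f1) (x, t) = pT n1 (x, t) - pT g2 (x, t) := by
    rw [pX_pT sf1, xf1]
    exact ((hasDerivAt_pT sn1 x t).sub (hasDerivAt_pT sg2 x t)).deriv
  have tg2 (x t : ℝ) : pX (pT g2) (x, t) = pT m2 (x, t) - pT f1 (x, t) := by
    rw [pX_pT sg2, xg2]
    exact ((hasDerivAt_pT sm2 x t).sub (hasDerivAt_pT sf1 x t)).deriv
  have tf2 (x t : ℝ) : pX (pT f2) (x, t) = pT g1 (x, t) - pT n2 (x, t) := by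
    rw [pX_pT sf2, xf2]
    exact ((hasDerivAt_pT sg1 x t).sub (hasDerivAt_pT sn2 x t)).deriv
  have tg1 (x t : ℝ) : pX (pT g1) (x, t) = pT f2 (x, t) - pT m1 (x, t) := by
    rw [pX_pT sg1, xg1]
    exact ((hasDerivAt_pT sf2 x t).sub (hasDerivAt_pT sm1 x t)).deriv
  have pf1 (x t : ℝ) : f1 (x + L, t) = f1 (x, t) := by
    simp only [hf1, hperu2, pX_periodic hperv1]
  have pf2 (x t : ℝ) : f2 (x + L, t) = f2 (x, t) := by
    simp only [hf2, hperu1, pX_periodic hperv2]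
  have pg1 (x t : ℝ) : g1 (x + L, t) = g1 (x, t) := by
    simp only [hg1, hperv2, pX_periodic hperu1]
  have pg2 (x t : ℝ) : g2 (x + L, t) = g2 (x, t) := by
    simp only [hg2, hperv1, pX_periodic hperu2]
  refine integral_eq_of_conservation_law
    (Φ := fun p => (f1 p * g1 p + f2 p * g2 p) * (m2 p * f2 p + n1 p * g1 p))
    (J := fun p => pT f1 p * pT g1 p + pT g2 p * pT f2 p
      + (f1 p * g1 p + f2 p * g2 p) * (pT f1 p * g1 p + f2 p * pT g2 p))
    (by fun_prop) ?_ ?_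
  · intro x t
    have dΦ := ((((hasDerivAt_pT sf1 x t).mul (hasDerivAt_pT sg1 x t)).add
      ((hasDerivAt_pT sf2 x t).mul (hasDerivAt_pT sg2 x t))).mul
      (((hasDerivAt_pT sm2 x t).mul (hasDerivAt_pT sf2 x t)).add
      ((hasDerivAt_pT sn1 x t).mul (hasDerivAt_pT sg1 x t)))).deriv
    have df1 := hasDerivAt_pX sf1 x t
    have df2 := hasDerivAt_pX sf2 x t
    have dg1 := hasDerivAt_pX sg1 x t
    have dg2 := hasDerivAt_pX sg2 x t
    have dF1 := hasDerivAt_pX (contDiff_pT sf1) x t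
    have dF2 := hasDerivAt_pX (contDiff_pT sf2) x t
    have dG1 := hasDerivAt_pX (contDiff_pT sg1) x t
    have dG2 := hasDerivAt_pX (contDiff_pT sg2) x t
    have dJ := ((dF1.mul dG1).add (dG2.mul dF2)).add
      (((df1.mul dg1).add (df2.mul dg2)).mul ((dF1.mul dg1).add (df2.mul dG2)))
    refine dJ.congr_deriv (Eq.trans ?_ dΦ.symm)
    simp only [Pi.add_apply, Pi.mul_apply]
    rw [tf1, tf2, tg1, tg2, xf1, xf2, xg1, xg2]
    obtain ⟨e1, e2, e3, e4⟩ := hsys (x, t)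
    have e1' := eq_neg_of_add_eq_zero_left ((add_assoc _ _ _).symm.trans e1)
    have e2' := sub_eq_zero.mp ((sub_sub _ _ _).symm.trans e2)
    have e3' := sub_eq_zero.mp ((sub_sub _ _ _).symm.trans e3)
    have e4' := eq_neg_of_add_eq_zero_left ((add_assoc _ _ _).symm.trans e4)
    rw [e1', e2', e3', e4']
    ring
  · intro t
    have z {f : ℝ × ℝ → ℝ} (hf : ∀ x t : ℝ, f (x + L, t) = f (x, t)) : f (L, t) = f (0, t) := by
      simpa using hf 0 t
    simp only [z pf1, z pf2, z pg1, z pg2, z (pT_periodic pf1), z (pT_periodic pf2),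
      z (pT_periodic pg1), z (pT_periodic pg2)]
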